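/- arXiv:2603.10645 — 5 statements merged into one kernel-verified Lean document; each statement's English description precedes it below -/
import Mathlib

section
/- Let n ≥ 2 and let a₁, …, aₙ be real numbers with a₁ + ⋯ + aₙ = 0. Then Σᵢ aᵢ³ ≤ ((n−2)/√(n(n−1))) · (Σᵢ aᵢ²)^{3/2}. -/
/-!
Put `S = ∑ aᵢ²`, `r = √(n(n-1))`, `c = √S / r` and `M = (n-1) c`. Equality holds at
`a = (M, -c, …, -c)`, which suggests summing `(M - aᵢ) (aᵢ + c)² ≥ 0`: every term vanishes there,
and the terms are nonnegative because `aᵢ ≤ M`, by Cauchy–Schwarz applied to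
`-aᵢ = ∑_{j ≠ i} aⱼ`. Since `∑ aᵢ = 0` and `n M c² = c S`, expanding the sum gives
`∑ aᵢ³ ≤ (M - c) S = (n-2) c S`, which is the claim.
-/

theorem card_mul_sq_le_of_sum_eq_zero (n : ℕ) (a : Fin n → ℝ) (hsum : ∑ i, a i = 0)
    (i : Fin n) : (n : ℝ) * a i ^ 2 ≤ ((n : ℝ) - 1) * ∑ j, a j ^ 2 := by
  have h := sq_sum_le_card_mul_sum_sq (s := Finset.univ.erase i) (f := a)
  have h1 := Finset.add_sum_erase Finset.univ a (Finset.mem_univ i)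
  have h2 := Finset.add_sum_erase Finset.univ (fun j => a j ^ 2) (Finset.mem_univ i)
  have hn : 1 ≤ n := i.pos
  rw [Finset.card_erase_of_mem (Finset.mem_univ i), Finset.card_univ, Fintype.card_fin,
    Nat.cast_sub hn, Nat.cast_one] at h
  rw [hsum] at h1
  have h3 : ∑ j ∈ Finset.univ.erase i, a j = -a i := by linarith
  rw [h3] at h
  rw [← h2]
  linarith

theorem sum_cube_le_of_sum_eq_zero (n : ℕ) (hn : 2 ≤ n) (a : Fin n → ℝ)
    (hsum : ∑ i, a i = 0) :
    ∑ i, (a i) ^ 3 ≤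
      ((n : ℝ) - 2) / Real.sqrt ((n : ℝ) * ((n : ℝ) - 1)) *
        (∑ i, (a i) ^ 2) ^ ((3 : ℝ) / 2) := by
  have hn' : (2 : ℝ) ≤ n := by exact_mod_cast hn
  have hbound := card_mul_sq_le_of_sum_eq_zero n a hsum
  have hS : 0 ≤ ∑ i, a i ^ 2 := Finset.sum_nonneg fun i _ => sq_nonneg _
  set S := ∑ i, a i ^ 2 with hSdef
  have hpow : S ^ ((3 : ℝ) / 2) = Real.sqrt S ^ 3 := by
    rw [Real.sqrt_eq_rpow, ← Real.rpow_natCast, ← Real.rpow_mul hS]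
    norm_num
  have hN : 0 < (n : ℝ) * ((n : ℝ) - 1) := by nlinarith
  rw [hpow]
  set r := Real.sqrt ((n : ℝ) * ((n : ℝ) - 1))
  have hr : 0 < r := Real.sqrt_pos.2 hN
  have hr2 : r ^ 2 = (n : ℝ) * ((n : ℝ) - 1) := Real.sq_sqrt hN.le
  set t := Real.sqrt S
  have ht : 0 ≤ t := Real.sqrt_nonneg S
  have ht2 : t ^ 2 = S := Real.sq_sqrt hS
  obtain ⟨c, hc⟩ : ∃ c, c = t / r := ⟨_, rfl⟩
  have hc0 : 0 ≤ c := hc ▸ div_nonneg ht hr.le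
  have hc2 : (n : ℝ) * ((n : ℝ) - 1) * c ^ 2 = S := by
    rw [hc, div_pow, hr2, ht2]
    rw [mul_div_assoc', mul_div_cancel_left₀ _ hN.ne']
  have hM (i : Fin n) : a i ≤ ((n : ℝ) - 1) * c := by
    refine le_of_sq_le_sq ?_ (mul_nonneg (by linarith) hc0)
    have h := hbound i
    rw [← hc2] at h
    refine le_of_mul_le_mul_left (h.trans_eq ?_) (by linarith : (0 : ℝ) < n)
    ring
  have hpos : 0 ≤ ∑ i, (((n : ℝ) - 1) * c - a i) * (a i + c) ^ 2 :=
    Finset.sum_nonneg fun i _ => mul_nonneg (sub_nonneg.2 (hM i)) (sq_nonneg _)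
  have hexp : ∑ i, (((n : ℝ) - 1) * c - a i) * (a i + c) ^ 2 =
      (((n : ℝ) - 1) * c - 2 * c) * S + (2 * ((n : ℝ) - 1) * c ^ 2 - c ^ 2) * ∑ i, a i
        + n * (((n : ℝ) - 1) * c ^ 3) - ∑ i, a i ^ 3 := by
    have hconst : (n : ℝ) * (((n : ℝ) - 1) * c ^ 3) = ∑ _i : Fin n, ((n : ℝ) - 1) * c ^ 3 := by
      simp
    rw [hconst, hSdef, Finset.mul_sum, Finset.mul_sum, ← Finset.sum_add_distrib,
      ← Finset.sum_add_distrib, ← Finset.sum_sub_distrib]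
    exact Finset.sum_congr rfl fun i _ => by ring
  rw [hexp, hsum] at hpos
  have hcS : (n : ℝ) * (((n : ℝ) - 1) * c ^ 3) = c * S := by rw [← hc2]; ring
  have hrhs : ((n : ℝ) - 2) / r * t ^ 3 = ((n : ℝ) - 2) * c * S := by
    rw [hc, ← ht2]; ring
  rw [hrhs]
  linarith
end

section
/- Let n ≥ 2 and let a₁, …, aₙ be real numbers with a₁ + ⋯ + aₙ = 0. Then |Σᵢ aᵢ³| = ((n−2)/√(n(n−1))) · (Σᵢ aᵢ²)^{3/2} holds if and only if at least n−1 of the numbers a₁, …, aₙ are equal, i.e., there exists an index i₀ such that aⱼ = aₖ for all indices j, k different from i₀. -/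
/-!
Write `∑ aᵢ² = n(n-1)t²` with `t ≥ 0`; the right-hand side is then `n(n-1)(n-2)t³`.
Since `∑ aᵢ = 0`, the Cauchy–Schwarz inequality gives `aᵢ ≤ (n-1)t`, so every term of
`∑ (aᵢ + t)² ((n-1)t - aᵢ) = n(n-1)(n-2)t³ - ∑ aᵢ³` is nonnegative. If `∑ aᵢ³` attains the bound,
every `aᵢ + t` is therefore `0` or `nt`. These numbers are nonnegative with sum `nt`, so once one of
them equals `nt` all the others vanish. The case of a negative cubic sum follows by replacing `a`
by `-a`, and the converse is a direct computation.
-/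

/-- The right-hand side of the equality, in terms of the normalised length `t`. -/
lemma bound_eq {x t S : ℝ} (hx : 2 ≤ x) (ht : 0 ≤ t) (hS : S = x * (x - 1) * t ^ 2) :
    (x - 2) / Real.sqrt (x * (x - 1)) * S ^ ((3 : ℝ) / 2) = x * (x - 1) * (x - 2) * t ^ 3 := by
  have hp : 0 < x * (x - 1) := mul_pos (by linarith) (by linarith)
  set q := Real.sqrt (x * (x - 1)) with hq
  have hq0 : 0 < q := Real.sqrt_pos.mpr hp
  have hq2 : q ^ 2 = x * (x - 1) := Real.sq_sqrt hp.le
  have hqt : 0 ≤ q * t := by positivity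
  have hpow : S ^ ((3 : ℝ) / 2) = (q * t) ^ 3 := by
    rw [hS, ← hq2, ← mul_pow, ← Real.rpow_natCast_mul hqt, ← Real.rpow_natCast]
    norm_num
  rw [hpow, ← hq2]
  field_simp

/-- By Cauchy–Schwarz, each entry of a zero-sum vector is at most `(n-1)t`. -/
lemma entry_le {n : ℕ} (hn : 2 ≤ n) (a : Fin n → ℝ) (hsum : ∑ i, a i = 0) {t : ℝ} (ht : 0 ≤ t)
    (hS : ∑ i, (a i) ^ 2 = (n : ℝ) * (n - 1) * t ^ 2) (i : Fin n) :
    a i ≤ ((n : ℝ) - 1) * t := by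
  have hx : (2 : ℝ) ≤ n := by exact_mod_cast hn
  have hcs := sq_sum_le_card_mul_sum_sq (s := Finset.univ.erase i) (f := a)
  have h1 := Finset.add_sum_erase Finset.univ a (Finset.mem_univ i)
  have h2 := Finset.add_sum_erase Finset.univ (fun j => a j ^ 2) (Finset.mem_univ i)
  have hc : ((Finset.univ.erase i).card : ℝ) = n - 1 := by
    rw [Finset.card_erase_of_mem (Finset.mem_univ i), Finset.card_univ, Fintype.card_fin,
      Nat.cast_sub (by omega), Nat.cast_one]
  rw [hc, show ∑ j ∈ Finset.univ.erase i, a j = -a i by linarith,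
    show ∑ j ∈ Finset.univ.erase i, a j ^ 2 = (n : ℝ) * (n - 1) * t ^ 2 - a i ^ 2 by linarith]
    at hcs
  refine le_of_sq_le_sq ?_ (mul_nonneg (by linarith) ht)
  refine le_of_mul_le_mul_left ?_ (show (0 : ℝ) < n by linarith)
  linarith

/-- The equality case of the one-sided bound `∑ aᵢ³ ≤ n(n-1)(n-2)t³`. -/
lemma exists_of_sum_cube_eq {n : ℕ} (hn : 2 ≤ n) (a : Fin n → ℝ) (hsum : ∑ i, a i = 0) {t : ℝ}
    (ht : 0 ≤ t) (hS : ∑ i, (a i) ^ 2 = (n : ℝ) * (n - 1) * t ^ 2)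
    (hC : ∑ i, (a i) ^ 3 = (n : ℝ) * (n - 1) * (n - 2) * t ^ 3) :
    ∃ i₀ : Fin n, ∀ j k : Fin n, j ≠ i₀ → k ≠ i₀ → a j = a k := by
  have hx : (2 : ℝ) ≤ n := by exact_mod_cast hn
  have hzero : ∑ i, (a i + t) ^ 2 * ((n - 1) * t - a i) = 0 := by
    have : ∀ i, (a i + t) ^ 2 * ((n - 1) * t - a i) =
        -(a i ^ 3) + (n - 3) * t * a i ^ 2 + (2 * n - 3) * t ^ 2 * a i + (n - 1) * t ^ 3 :=
      fun i => by ring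
    simp only [this, Finset.sum_add_distrib, Finset.sum_neg_distrib, ← Finset.mul_sum, hC, hS,
      hsum, Finset.sum_const, Finset.card_univ, Fintype.card_fin, nsmul_eq_mul]
    ring
  have hval : ∀ i, a i = -t ∨ a i = (n - 1) * t := by
    intro i
    have h := (Finset.sum_eq_zero_iff_of_nonneg (fun j _ => mul_nonneg (sq_nonneg (a j + t))
      (sub_nonneg.mpr (entry_le hn a hsum ht hS j)))).mp hzero i (Finset.mem_univ i)
    rcases mul_eq_zero.mp h with h | h
    · left; linarith [pow_eq_zero_iff (two_ne_zero) |>.mp h]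
    · right; linarith
  by_cases hall : ∀ i, a i = -t
  · exact ⟨⟨0, by omega⟩, fun j k _ _ => by rw [hall j, hall k]⟩
  push Not at hall
  obtain ⟨i₀, hi₀⟩ := hall
  have hbig := (hval i₀).resolve_left hi₀
  have hnn : ∀ i, 0 ≤ a i + t := by
    intro i
    rcases hval i with h | h
    · linarith
    · rw [h]; nlinarith
  have htot : ∑ i, (a i + t) = n * t := by
    simp [Finset.sum_add_distrib, hsum]
  have herase := Finset.add_sum_erase Finset.univ (fun j => a j + t) (Finset.mem_univ i₀)
  have hrest : ∑ j ∈ Finset.univ.erase i₀, (a j + t) = 0 := by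
    rw [htot, hbig] at herase
    linarith
  have hother : ∀ j, j ≠ i₀ → a j + t = 0 := fun j hj =>
    (Finset.sum_eq_zero_iff_of_nonneg (fun j _ => hnn j)).mp hrest j
      (Finset.mem_erase.mpr ⟨hj, Finset.mem_univ j⟩)
  exact ⟨i₀, fun j k hj hk => by linarith [hother j hj, hother k hk]⟩

theorem abs_sum_cube_eq_iff_of_sum_eq_zero (n : ℕ) (hn : 2 ≤ n) (a : Fin n → ℝ)
    (hsum : ∑ i, a i = 0) :
    |∑ i, (a i) ^ 3| =
        ((n : ℝ) - 2) / Real.sqrt ((n : ℝ) * ((n : ℝ) - 1)) *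
          (∑ i, (a i) ^ 2) ^ ((3 : ℝ) / 2) ↔
      ∃ i₀ : Fin n, ∀ j k : Fin n, j ≠ i₀ → k ≠ i₀ → a j = a k := by
  have hx : (2 : ℝ) ≤ n := by exact_mod_cast hn
  have hp : 0 < (n : ℝ) * (n - 1) := mul_pos (by linarith) (by linarith)
  constructor
  · intro h
    obtain ⟨t, ht, hS⟩ : ∃ t : ℝ, 0 ≤ t ∧ ∑ i, (a i) ^ 2 = (n : ℝ) * (n - 1) * t ^ 2 := by
      refine ⟨Real.sqrt ((∑ i, (a i) ^ 2) / (n * (n - 1))), Real.sqrt_nonneg _, ?_⟩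
      rw [Real.sq_sqrt (div_nonneg (Finset.sum_nonneg fun i _ => sq_nonneg _) hp.le),
        mul_div_cancel₀ _ hp.ne']
    rw [bound_eq hx ht hS] at h
    rcases abs_choice (∑ i, (a i) ^ 3) with h' | h'
    · exact exists_of_sum_cube_eq hn a hsum ht hS (h' ▸ h)
    · obtain ⟨i₀, hi⟩ := exists_of_sum_cube_eq hn (fun i => -a i) (by simp [hsum]) ht
        (by simpa using hS) (by
          simp only [Odd.neg_pow (by decide : Odd 3), Finset.sum_neg_distrib]
          exact h' ▸ h)
      exact ⟨i₀, fun j k hj hk => neg_injective (hi j k hj hk)⟩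
  · rintro ⟨i₀, hi⟩
    obtain ⟨c, hc⟩ : ∃ c, ∀ j, j ≠ i₀ → a j = c := by
      have : Nontrivial (Fin n) := Fin.nontrivial_iff_two_le.mpr hn
      obtain ⟨k, hk⟩ := exists_ne i₀
      exact ⟨a k, fun j hj => hi j k hj hk⟩
    have hpow : ∀ m : ℕ, ∑ i, a i ^ m = a i₀ ^ m + (n - 1) * c ^ m := by
      intro m
      rw [← Finset.add_sum_erase Finset.univ (fun j => a j ^ m) (Finset.mem_univ i₀),
        Finset.sum_congr rfl (fun j hj => by rw [hc j (Finset.ne_of_mem_erase hj)]),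
        Finset.sum_const, Finset.card_erase_of_mem (Finset.mem_univ i₀), Finset.card_univ,
        Fintype.card_fin, nsmul_eq_mul, Nat.cast_sub (by omega), Nat.cast_one]
    have h0 : a i₀ = -((n - 1) * c) := by
      have := hpow 1
      simp only [pow_one, hsum] at this
      linarith
    rw [bound_eq hx (abs_nonneg c) (by rw [hpow, h0, sq_abs]; ring), hpow, h0,
      show (-((n - 1) * c)) ^ 3 + ((n : ℝ) - 1) * c ^ 3 = -(n * (n - 1) * (n - 2) * c ^ 3) by ring,
      abs_neg, abs_mul, abs_pow, abs_of_nonneg (mul_nonneg hp.le (by linarith))]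
end

section
/- Let n ≥ 2 and let A be a real symmetric n×n matrix with trace(A) = 0. Then |trace(A³)| ≤ ((n−2)/√(n(n−1))) · (trace(A²))^{3/2}. -/
/-!
By the spectral theorem the claim concerns real numbers `x i` (the eigenvalues) with `∑ x i = 0`.
Write `∑ (x i)² = n (n - 1) c²` with `c ≥ 0`. Cauchy-Schwarz applied to the other `n - 1` numbers
gives `x i ≤ (n - 1) c` (`le_of_sum_eq_zero`), so `(x i - (n - 1) c) (x i + c)² ≤ 0`; this polynomial vanishes exactly at
the values of the extremal configuration `((n - 1) c, -c, …, -c)`. Summing over `i` bounds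
`∑ (x i)³` by `(n - 2) c ∑ (x i)²` (`sum_cube_le`), and applying this to `-x` bounds the absolute value.
-/

theorem Matrix.IsHermitian.trace_pow_eq_sum_eigenvalues_pow {n : ℕ}
    {A : Matrix (Fin n) (Fin n) ℝ} (hA : A.IsHermitian) (k : ℕ) :
    (A ^ k).trace = ∑ i, hA.eigenvalues i ^ k := by
  conv_lhs => rw [hA.spectral_theorem, ← map_pow, Unitary.conjStarAlgAut_apply,
    Matrix.trace_mul_cycle, Unitary.coe_star_mul_self, one_mul, Matrix.diagonal_pow,
    Matrix.trace_diagonal]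
  simp

/-- Cauchy-Schwarz for the entries other than `x i`, whose sum is `-x i`. -/
theorem le_of_sum_eq_zero {n : ℕ} (hn : 2 ≤ n) {x : Fin n → ℝ} (hx : ∑ i, x i = 0) {c : ℝ}
    (hc : 0 ≤ c) (hS : ∑ i, x i ^ 2 = n * (n - 1) * c ^ 2) (i : Fin n) :
    x i ≤ (n - 1) * c := by
  have hn' : (2 : ℝ) ≤ n := by exact_mod_cast hn
  have hcs := sq_sum_le_card_mul_sum_sq (s := Finset.univ.erase i) (f := x)
  have h1 := Finset.add_sum_erase Finset.univ x (Finset.mem_univ i)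
  have h2 := Finset.add_sum_erase Finset.univ (fun j => x j ^ 2) (Finset.mem_univ i)
  rw [Finset.card_erase_of_mem (Finset.mem_univ i), Finset.card_univ, Fintype.card_fin,
    Nat.cast_sub (by lia), Nat.cast_one,
    show ∑ j ∈ Finset.univ.erase i, x j = -x i by linarith,
    show ∑ j ∈ Finset.univ.erase i, x j ^ 2 = n * (n - 1) * c ^ 2 - x i ^ 2 by
      linarith] at hcs
  refine abs_le_of_sq_le_sq' ?_ (by nlinarith) |>.2
  have : (n : ℝ) * x i ^ 2 ≤ n * ((n - 1) * c) ^ 2 := by linarith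
  exact le_of_mul_le_mul_left this (by linarith)

/-- The sum over `i` of `(x i - (n - 1) c) (x i + c)² ≤ 0`; its linear part drops out as `∑ x i = 0`. -/
theorem sum_cube_le {n : ℕ} (hn : 2 ≤ n) {x : Fin n → ℝ} (hx : ∑ i, x i = 0) {c : ℝ}
    (hc : 0 ≤ c) (hS : ∑ i, x i ^ 2 = n * (n - 1) * c ^ 2) :
    ∑ i, x i ^ 3 ≤ (n - 2) * c * ∑ i, x i ^ 2 := by
  have h : ∑ i, (x i - (n - 1) * c) * (x i + c) ^ 2 ≤ 0 :=
    Finset.sum_nonpos fun i _ => mul_nonpos_of_nonpos_of_nonneg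
      (sub_nonpos.2 (le_of_sum_eq_zero hn hx hc hS i)) (sq_nonneg _)
  have e : ∑ i, (x i - (n - 1) * c) * (x i + c) ^ 2 =
      ∑ i, x i ^ 3 - (n - 3) * c * ∑ i, x i ^ 2 - (2 * n - 3) * c ^ 2 * ∑ i, x i
        - n * ((n - 1) * c ^ 3) := by
    have hconst : (n : ℝ) * ((n - 1) * c ^ 3) = ∑ _i : Fin n, ((n : ℝ) - 1) * c ^ 3 := by simp
    rw [hconst, Finset.mul_sum, Finset.mul_sum, ← Finset.sum_sub_distrib,
      ← Finset.sum_sub_distrib, ← Finset.sum_sub_distrib]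
    exact Finset.sum_congr rfl fun i _ => by ring
  rw [e, hx, hS] at h
  rw [hS]
  linarith

theorem abs_trace_cube_le (n : ℕ) (hn : 2 ≤ n) (A : Matrix (Fin n) (Fin n) ℝ)
    (hA : A.IsSymm) (htr : A.trace = 0) :
    |(A ^ 3).trace| ≤
      ((n : ℝ) - 2) / Real.sqrt ((n : ℝ) * ((n : ℝ) - 1)) *
        ((A ^ 2).trace) ^ ((3 : ℝ) / 2) := by
  have hn' : (2 : ℝ) ≤ n := by exact_mod_cast hn
  have hH : A.IsHermitian := by
    rwa [Matrix.IsHermitian, Matrix.conjTranspose_eq_transpose_of_trivial]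
  have hx : ∑ i, hH.eigenvalues i = 0 := by
    simpa [htr] using (hH.trace_pow_eq_sum_eigenvalues_pow 1).symm
  rw [hH.trace_pow_eq_sum_eigenvalues_pow, hH.trace_pow_eq_sum_eigenvalues_pow]
  set x := hH.eigenvalues
  set S := ∑ i, x i ^ 2 with hSdef
  have hS0 : 0 ≤ S := Finset.sum_nonneg fun i _ => sq_nonneg _
  have hN : 0 < (n : ℝ) * (n - 1) := by nlinarith
  set c := √S / √((n : ℝ) * (n - 1)) with hcdef
  have hc : 0 ≤ c := by positivity
  have hS : S = n * (n - 1) * c ^ 2 := by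
    rw [hcdef, div_pow, Real.sq_sqrt hS0, Real.sq_sqrt hN.le]
    exact (mul_div_cancel₀ S hN.ne').symm
  have hrpow : S ^ ((3 : ℝ) / 2) = √S * S := by
    rw [show (3 : ℝ) / 2 = 1 / 2 + 1 by norm_num,
      Real.rpow_add_of_nonneg hS0 (by norm_num) (by norm_num), Real.rpow_one, Real.sqrt_eq_rpow]
  have hrhs : ((n : ℝ) - 2) / √((n : ℝ) * (n - 1)) * S ^ ((3 : ℝ) / 2) = (n - 2) * c * S := by
    rw [hrpow, hcdef]
    ring
  rw [hrhs]
  refine abs_le'.2 ⟨sum_cube_le hn hx hc hS, ?_⟩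
  have hneg := sum_cube_le (x := fun i => -x i) hn (by simp [hx]) hc (by simpa using hS)
  simpa [Odd.neg_pow (by decide : Odd 3)] using hneg
end

section
/- Let r ≥ 0 be a real number and let a₁, a₂, a₃ be real numbers with a₁ + a₂ + a₃ = 0 and a₁² + a₂² + a₃² ≤ r²/24. Then a₁³ + a₂³ + a₃³ ≥ −(r/12) · (a₁² + a₂² + a₃²). -/
/-! With `S = ∑ aᵢ²` and `p = ∑ aᵢ³`, the condition `∑ aᵢ = 0` makes `S³ - 6p²` twice the
discriminant of `∏ (X - aᵢ)`, hence nonnegative. So `p² ≤ S³ / 6 ≤ (r S / 12)²` by the bound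
on `S`, and taking square roots gives `|p| ≤ r S / 12`. -/

theorem sum_cube_ge_of_small (r : ℝ) (hr : 0 ≤ r) (a₁ a₂ a₃ : ℝ)
    (hsum : a₁ + a₂ + a₃ = 0) (hle : a₁ ^ 2 + a₂ ^ 2 + a₃ ^ 2 ≤ r ^ 2 / 24) :
    a₁ ^ 3 + a₂ ^ 3 + a₃ ^ 3 ≥ -(r / 12) * (a₁ ^ 2 + a₂ ^ 2 + a₃ ^ 2) := by
  have hdisc : (a₁ ^ 2 + a₂ ^ 2 + a₃ ^ 2) ^ 3 - 6 * (a₁ ^ 3 + a₂ ^ 3 + a₃ ^ 3) ^ 2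
      = 2 * ((a₁ - a₂) * (a₂ - a₃) * (a₃ - a₁)) ^ 2 := by
    obtain rfl : a₃ = -a₁ - a₂ := by linarith
    ring
  have hS : 0 ≤ a₁ ^ 2 + a₂ ^ 2 + a₃ ^ 2 := by positivity
  generalize a₁ ^ 2 + a₂ ^ 2 + a₃ ^ 2 = S at *
  have hsq : (a₁ ^ 3 + a₂ ^ 3 + a₃ ^ 3) ^ 2 ≤ (r / 12 * S) ^ 2 := by
    have h := mul_le_mul_of_nonneg_left hle (sq_nonneg S)
    have hd := sq_nonneg ((a₁ - a₂) * (a₂ - a₃) * (a₃ - a₁))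
    linarith
  have := (abs_le_of_sq_le_sq' hsq (by positivity)).1
  linarith
end

section
/- Let A be a real symmetric 3×3 matrix with trace(A) = 0. Then trace(A⁵) = (5/6) · trace(A²) · trace(A³). -/
/-! For a traceless `3 × 3` matrix, Cayley–Hamilton reads `A³ = c A + d`, with `c = tr(A²) / 2` and
`d = det A`. Taking traces gives `tr(A³) = 3d`; multiplying by `A²` and taking traces gives
`tr(A⁵) = c tr(A³) + d tr(A²) = 5cd`, which is `(5/6) (2c) (3d)`. -/

/-- Cayley–Hamilton for a traceless `3 × 3` matrix: the second elementary symmetric function of the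
eigenvalues is `-tr(A²) / 2` because the first one vanishes. -/
lemma pow_three_of_trace_eq_zero (A : Matrix (Fin 3) (Fin 3) ℝ) (htr : A.trace = 0) :
    A ^ 3 = ((A ^ 2).trace / 2) • A + A.det • (1 : Matrix (Fin 3) (Fin 3) ℝ) := by
  have h : A 2 2 = -A 0 0 - A 1 1 := by
    rw [Matrix.trace_fin_three] at htr
    linarith
  ext i j
  fin_cases i <;> fin_cases j <;>
    simp [pow_succ, Matrix.mul_apply, Fin.sum_univ_three, Matrix.trace_fin_three,
      Matrix.det_fin_three, h] <;> ring

theorem trace_pow_five (A : Matrix (Fin 3) (Fin 3) ℝ) (hA : A.IsSymm)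
    (htr : A.trace = 0) :
    (A ^ 5).trace = (5 / 6) * (A ^ 2).trace * (A ^ 3).trace := by
  have h := pow_three_of_trace_eq_zero A htr
  have h3 : (A ^ 3).trace = 3 * A.det := by
    rw [h]
    simp [htr, mul_comm]
  have h5 : (A ^ 5).trace = (A ^ 2).trace / 2 * (A ^ 3).trace + A.det * (A ^ 2).trace := by
    have e : A ^ 5 = ((A ^ 2).trace / 2) • A ^ 3 + A.det • A ^ 2 := by
      rw [show A ^ 5 = A ^ 2 * A ^ 3 from pow_add A 2 3]
      conv_lhs => rw [h]
      rw [mul_add, mul_smul_comm, mul_smul_comm, mul_one, ← pow_succ]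
    rw [e, Matrix.trace_add, Matrix.trace_smul, Matrix.trace_smul, smul_eq_mul, smul_eq_mul]
  rw [h5, h3]
  ring
end
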